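/- Let G be a finite abelian group, let f, g : G → ℝ, and suppose ρ₂(f) = ρ₂(g) and ρ_k(f) = ρ_k(g) for some k ≥ 2. Let S = {χ : f̂(χ) ≠ 0}. Then S = {χ : ĝ(χ) ≠ 0}, and for any characters x₁,...,x_m, y₁,...,y_n ∈ S with x₁···x_m = y₁···y_n and m + n = k, we have ∏ᵢ f̂(xᵢ)/ĝ(xᵢ) = ∏ⱼ f̂(yⱼ)/ĝ(yⱼ). -/

import Mathlib

open Finset

/-- The `n`-th order autocorrelation of a real-valued `f : G → ℝ`. -/
noncomputable def rho {G : Type*} [AddCommGroup G] [Fintype G] (n : ℕ) (f : G → ℝ)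
    (t : Fin (n - 1) → G) : ℝ :=
  ∑ x, f x * ∏ i, f (x + t i)

/-- The Fourier transform of a real-valued `f : G → ℝ` at an additive character `χ`. -/
noncomputable def fhat {G : Type*} [AddCommGroup G] [Fintype G] (f : G → ℝ)
    (χ : AddChar G ℂ) : ℂ :=
  ∑ x, (f x : ℂ) * (starRingEnd ℂ) (χ x)

lemma key_id {G : Type*} [AddCommGroup G] [Fintype G] (f : G → ℝ) (n : ℕ)
    (c : Fin (n + 1) → AddChar G ℂ) (hc : ∏ i, c i = 1) :
    ∏ i, fhat f (c i) =
      ∑ t : Fin n → G, (rho (n + 1) f t : ℂ) * ∏ i, (starRingEnd ℂ) (c i.succ (t i)) := by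
  classical
  have hshift : ∀ (x : G) (ψ : AddChar G ℂ), fhat f ψ =
      (starRingEnd ℂ) (ψ x) * ∑ t, (f (x + t) : ℂ) * (starRingEnd ℂ) (ψ t) := by
    intro x ψ
    unfold fhat
    rw [← Equiv.sum_comp (Equiv.addLeft x), Finset.mul_sum]
    refine Finset.sum_congr rfl fun t _ => ?_
    simp only [Equiv.coe_addLeft, AddChar.map_add_eq_mul, map_mul]
    ring
  have hone : ∀ x, (starRingEnd ℂ) (c 0 x) * ∏ i : Fin n, (starRingEnd ℂ) (c i.succ x) = 1 := by
    intro x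
    rw [← map_prod, ← map_mul, ← Fin.prod_univ_succ (fun i => c i x)]
    have := congrArg (fun ψ : AddChar G ℂ => ψ x) hc
    simp only [AddChar.prod_apply, AddChar.one_apply] at this
    rw [this, map_one]
  rw [Fin.prod_univ_succ]
  have h0 : fhat f (c 0) = ∑ x, (f x : ℂ) * (starRingEnd ℂ) (c 0 x) := rfl
  rw [h0, Finset.sum_mul]
  have hx : ∀ x, (f x : ℂ) * (starRingEnd ℂ) (c 0 x) * ∏ i : Fin n, fhat f (c i.succ) =
      ∑ t : Fin n → G, (f x : ℂ) * ∏ i, ((f (x + t i) : ℂ) * (starRingEnd ℂ) (c i.succ (t i))) := by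
    intro x
    rw [Finset.prod_congr rfl (fun i _ => hshift x (c (Fin.succ i))), Finset.prod_mul_distrib,
      Finset.prod_univ_sum, Fintype.piFinset_univ, ← Finset.mul_sum]
    linear_combination ((f x : ℂ) * ∑ t : Fin n → G,
      ∏ i, ((f (x + t i) : ℂ) * (starRingEnd ℂ) (c i.succ (t i)))) * hone x
  rw [Finset.sum_congr rfl (fun x _ => hx x), Finset.sum_comm]
  refine Finset.sum_congr rfl fun t _ => ?_
  simp only [rho, Complex.ofReal_sum, Complex.ofReal_mul, Complex.ofReal_prod, Finset.sum_mul,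
    Finset.prod_mul_distrib, mul_assoc]
  rfl

lemma key_eq {G : Type*} [AddCommGroup G] [Fintype G] (f g : G → ℝ) (k : ℕ) (hk : 1 ≤ k)
    (h : rho k f = rho k g) (c : Fin k → AddChar G ℂ) (hc : ∏ i, c i = 1) :
    ∏ i, fhat f (c i) = ∏ i, fhat g (c i) := by
  obtain ⟨n, rfl⟩ : ∃ n, k = n + 1 := ⟨k - 1, by omega⟩
  rw [key_id f n c hc, key_id g n c hc, h]

lemma fhat_inv {G : Type*} [AddCommGroup G] [Fintype G] (f : G → ℝ) (χ : AddChar G ℂ) :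
    fhat f χ⁻¹ = (starRingEnd ℂ) (fhat f χ) := by
  simp [fhat, map_sum, AddChar.map_neg_eq_conj]

theorem two_and_k_lemma {G : Type*} [AddCommGroup G] [Fintype G] (f g : G → ℝ)
    (k : ℕ) (hk : 2 ≤ k)
    (h2 : rho 2 f = rho 2 g) (hkdata : rho k f = rho k g) :
    {χ : AddChar G ℂ | fhat f χ ≠ 0} = {χ : AddChar G ℂ | fhat g χ ≠ 0} ∧
    ∀ (m n : ℕ) (x : Fin m → AddChar G ℂ) (y : Fin n → AddChar G ℂ),
      m + n = k →
      (∀ i, fhat f (x i) ≠ 0) → (∀ j, fhat f (y j) ≠ 0) →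
      (∏ i, x i) = (∏ j, y j) →
      (∏ i, fhat f (x i) / fhat g (x i)) = ∏ j, fhat f (y j) / fhat g (y j) := by
  classical
  have H2 : ∀ χ, fhat f χ * fhat f χ⁻¹ = fhat g χ * fhat g χ⁻¹ := by
    intro χ
    have := key_eq f g 2 (by norm_num) h2 ![χ, χ⁻¹] (by simp)
    simpa using this
  have hS : ∀ χ, fhat f χ = 0 ↔ fhat g χ = 0 := by
    intro χ
    have := H2 χ
    rw [fhat_inv, fhat_inv] at this
    constructor
    · intro h
      rw [h] at this
      simpa using this.symm
    · intro h
      rw [h] at this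
      simpa using this
  refine ⟨by ext χ; simp [hS], ?_⟩
  intro m n x y hmn hx hy hxy
  subst hmn
  have hk := key_eq f g (m + n) (by omega) hkdata (Fin.append x (fun j => (y j)⁻¹)) (by
    simp [Fin.prod_univ_add, hxy])
  simp only [Fin.prod_univ_add, Fin.append_left, Fin.append_right] at hk
  have hy2 : (∏ j, fhat f (y j)) * ∏ j, fhat f (y j)⁻¹ =
      (∏ j, fhat g (y j)) * ∏ j, fhat g (y j)⁻¹ := by
    rw [← Finset.prod_mul_distrib, ← Finset.prod_mul_distrib]
    exact Finset.prod_congr rfl fun j _ => H2 _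
  have hgx : ∏ i, fhat g (x i) ≠ 0 :=
    Finset.prod_ne_zero_iff.2 fun i _ h => hx i ((hS _).2 h)
  have hgy : ∏ j, fhat g (y j) ≠ 0 :=
    Finset.prod_ne_zero_iff.2 fun i _ h => hy i ((hS _).2 h)
  have hfy : ∏ j, fhat f (y j)⁻¹ ≠ 0 :=
    Finset.prod_ne_zero_iff.2 fun i _ h => hy i (by rw [fhat_inv] at h; simpa using h)
  rw [Finset.prod_div_distrib, Finset.prod_div_distrib, div_eq_div_iff hgx hgy]
  apply mul_right_cancel₀ hfy
  linear_combination (∏ j, fhat g (y j)) * hk - (∏ i, fhat g (x i)) * hy2
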